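/- (Proposition 2, part 3) Let D be any disjunctive state, i a nominal, φ a hybrid formula, and j a nominal not occurring in D ⋁ (O, i : ◇φ). Then D ⋁ (O, i : ◇φ) is winning if and only if D ⋁ (O, j : R(i,j) ∧ φ) is winning. -/

import Mathlib

/-- Hybrid logic formulas over nominals `ℕ` and propositional variables `ℕ`
(the two sorts are kept disjoint by the constructors). -/
inductive Form : Type where
  | prop : ℕ → Form
  | nom : ℕ → Form
  | rel : ℕ → ℕ → Form
  | and : Form → Form → Form
  | or : Form → Form → Form
  | imp : Form → Form → Form
  | neg : Form → Form
  | at_ : ℕ → Form → Form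
  | box : Form → Form
  | dia : Form → Form

/-- A model for hybrid logic: a nonempty set of worlds, an accessibility
relation, a valuation and an assignment of nominals to worlds. -/
structure Model where
  W : Type
  ne : Nonempty W
  R : W → W → Prop
  V : ℕ → W → Prop
  g : ℕ → W

/-- Satisfaction of a formula at a world of a model. -/
def sat (M : Model) : M.W → Form → Prop
  | w, .prop p => M.V p w
  | w, .nom i => M.g i = w
  | _, .rel i j => M.R (M.g i) (M.g j)
  | w, .and φ ψ => sat M w φ ∧ sat M w ψ
  | w, .or φ ψ => sat M w φ ∨ sat M w ψ
  | w, .imp φ ψ => ¬ sat M w φ ∨ sat M w ψ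
  | w, .neg φ => ¬ sat M w φ
  | _, .at_ i φ => sat M (M.g i) φ
  | w, .box φ => ∀ v, M.R w v → sat M v φ
  | w, .dia φ => ∃ v, M.R w v ∧ sat M v φ

/-- A model is named iff every world has a name, i.e. the assignment is surjective. -/
def Model.Named (M : Model) : Prop := Function.Surjective M.g

/-- A formula is valid iff it is true at every world of every model. -/
def Valid (φ : Form) : Prop := ∀ (M : Model) (w : M.W), sat M w φ

/-- Roles: `pro` means I am the proponent (`P`), `opp` that I am the opponent (`O`). -/
inductive Role : Type where
  | pro : Role
  | opp : Role

/-- Role switch. -/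
def Role.swap : Role → Role
  | .pro => .opp
  | .opp => .pro

/-- Game states of the semantic game over a named model, with worlds referred to
by their names: `loc r i φ` is `Q, i : φ` and `glob r φ` is `Q : φ`. -/
inductive NState : Type where
  | loc : Role → ℕ → Form → NState
  | glob : Role → Form → NState

/-- Elementary formulas: `p`, `i`, `R(i,j)`. -/
def Form.elem : Form → Prop
  | .prop _ => True
  | .nom _ => True
  | .rel _ _ => True
  | _ => False

/-- Elementary game states: states `Q, i : φ` with `φ` elementary (these are the
leaves of the semantic game over named models). -/
def NState.elem : NState → Prop
  | .loc _ _ φ => φ.elem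
  | .glob _ _ => False

/-- States labelled "I" (where it is My choice); all other non-leaf states are labelled "Y". -/
def NState.myTurn : NState → Prop
  | .loc .pro _ (.or _ _) => True
  | .loc .pro _ (.imp _ _) => True
  | .loc .pro _ (.neg _) => True
  | .loc .pro _ (.at_ _ _) => True
  | .loc .pro _ (.dia _) => True
  | .loc .opp _ (.and _ _) => True
  | .loc .opp _ (.box _) => True
  | .glob .opp _ => True
  | _ => False

/-- The (model-independent) child relation of the semantic game over named models,
using the reformulated rules `(R_□)`, `(R_◇)` and `(R_U)`:
`NChild s t` says that `t` is a child of `s` in the game tree. -/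
inductive NChild : NState → NState → Prop where
  | orL (r i φ ψ) : NChild (.loc r i (.or φ ψ)) (.loc r i φ)
  | orR (r i φ ψ) : NChild (.loc r i (.or φ ψ)) (.loc r i ψ)
  | andL (r i φ ψ) : NChild (.loc r i (.and φ ψ)) (.loc r i φ)
  | andR (r i φ ψ) : NChild (.loc r i (.and φ ψ)) (.loc r i ψ)
  | impL (r i φ ψ) : NChild (.loc r i (.imp φ ψ)) (.loc r.swap i φ)
  | impR (r i φ ψ) : NChild (.loc r i (.imp φ ψ)) (.loc r i ψ)
  | neg (r i φ) : NChild (.loc r i (.neg φ)) (.loc r.swap i φ)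
  | at_ (r i j φ) : NChild (.loc r i (.at_ j φ)) (.loc r j φ)
  | box (r i φ) (j : ℕ) : NChild (.loc r i (.box φ)) (.loc r j (.or (.neg (.rel i j)) φ))
  | dia (r i φ) (j : ℕ) : NChild (.loc r i (.dia φ)) (.loc r j (.and (.rel i j) φ))
  | glob (r φ) (i : ℕ) : NChild (.glob r φ) (.loc r i φ)

/-- The label of an elementary leaf state in the game over the model `M`:
"I" iff the corresponding elementary claim is correct. -/
def elemIWin (M : Model) : NState → Prop
  | .loc .pro i φ => sat M (M.g i) φ
  | .loc .opp i φ => ¬ sat M (M.g i) φ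
  | .glob _ _ => False

/-- I have a winning strategy for the semantic game `G(M, s)` over a named model:
at "I"-nodes I keep one child, at "Y"-nodes all children, and all leaves are labelled "I". -/
inductive IWinsN (M : Model) : NState → Prop where
  | leaf {s} : s.elem → elemIWin M s → IWinsN M s
  | move {s t} : s.myTurn → NChild s t → IWinsN M t → IWinsN M s
  | resp {s} : ¬ s.myTurn → ¬ s.elem → (∀ t, NChild s t → IWinsN M t) → IWinsN M s

/-- You have a winning strategy for the semantic game `G(M, s)` over a named model:
at "Y"-nodes You keep one child, at "I"-nodes all children, and all leaves are labelled "Y". -/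
inductive YWinsN (M : Model) : NState → Prop where
  | leaf {s} : s.elem → ¬ elemIWin M s → YWinsN M s
  | move {s t} : ¬ s.myTurn → NChild s t → YWinsN M t → YWinsN M s
  | resp {s} : s.myTurn → (∀ t, NChild s t → YWinsN M t) → YWinsN M s

/-- A disjunctive state: a finite multiset of game states. -/
abbrev DState : Type := Multiset NState

/-- A disjunctive state is elementary iff all its game states are. -/
def DElem (D : DState) : Prop := ∀ s ∈ D, s.elem

/-- A regulation function maps every non-elementary disjunctive state to one of
its non-elementary game states. -/
def IsRegulation (ρ : DState → NState) : Prop :=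
  ∀ D : DState, ¬ DElem D → ρ D ∈ D ∧ ¬ (ρ D).elem

/-- `D` is game valid: for every named model `M` there is a member of `D` for
which I have a winning strategy in the semantic game over `M`. -/
def GameValid (D : DState) : Prop :=
  ∀ M : Model, M.Named → ∃ s ∈ D, IWinsN M s

/-- I have a winning strategy for the disjunctive game `DG(D, ρ)`.
At the state `g ⋁ D` with `ρ (g ⋁ D) = g`: if `g` is labelled "I", I either move in `g`
or duplicate `g`; if `g` is labelled "Y", You move in `g` and I must win after every move.
An elementary disjunctive state is a leaf labelled "I" (winning for Me) iff for every named
model some member of it is a leaf labelled "I" of the semantic game over that model.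
Since winning strategies are wellfounded trees, infinite plays are not winning for Me. -/
inductive DWins (ρ : DState → NState) : DState → Prop where
  | leaf {D : DState} : DElem D → (∀ M : Model, M.Named → ∃ s ∈ D, IWinsN M s) →
      DWins ρ D
  | movI {D : DState} {g g' : NState} : ρ (g ::ₘ D) = g → g.myTurn → NChild g g' →
      DWins ρ (g' ::ₘ D) → DWins ρ (g ::ₘ D)
  | dup {D : DState} {g : NState} : ρ (g ::ₘ D) = g → g.myTurn →
      DWins ρ (g ::ₘ g ::ₘ D) → DWins ρ (g ::ₘ D)
  | movY {D : DState} {g : NState} : ρ (g ::ₘ D) = g → ¬ g.myTurn → ¬ g.elem →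
      (∀ g', NChild g g' → DWins ρ (g' ::ₘ D)) → DWins ρ (g ::ₘ D)

/-- `D` is winning: there is a regulation `ρ` such that I have a winning strategy
for `DG(D, ρ)`. -/
def Winning (D : DState) : Prop :=
  ∃ ρ : DState → NState, IsRegulation ρ ∧ DWins ρ D

/-- `Form.occurs k φ`: the nominal `k` occurs in the formula `φ`. -/
def Form.occurs (k : ℕ) : Form → Prop
  | .prop _ => False
  | .nom i => i = k
  | .rel i j => i = k ∨ j = k
  | .and φ ψ => φ.occurs k ∨ ψ.occurs k
  | .or φ ψ => φ.occurs k ∨ ψ.occurs k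
  | .imp φ ψ => φ.occurs k ∨ ψ.occurs k
  | .neg φ => φ.occurs k
  | .at_ i φ => i = k ∨ φ.occurs k
  | .box φ => φ.occurs k
  | .dia φ => φ.occurs k

/-- A nominal occurs in a game state iff it occurs as its label or in its formula. -/
def NState.occurs (k : ℕ) : NState → Prop
  | .loc _ i φ => i = k ∨ φ.occurs k
  | .glob _ φ => φ.occurs k

/-- A nominal occurs in a disjunctive state iff it occurs in one of its game states. -/
def DOccurs (k : ℕ) (D : DState) : Prop := ∃ s ∈ D, s.occurs k

/-!
A position is winning as soon as some wellfounded tree of moves for Me exists: at each position,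
act as a derivation of least ordinal rank does; this turns all such trees into one regulation. So
winning is closed under the rules of the disjunctive game, no matter which component they act on,
and Your moves are invertible by permuting them with the moves in other components.

Winning is also preserved by every renaming of nominals. For surjective renamings the game trees
correspond, because every instance chosen by You has a preimage; an arbitrary renaming agrees with a
surjective one on the finitely many nominals that occur. Renaming the fresh `j` to `k` therefore
wins against every answer `k` that You may give to `O, i : ◇φ`.
-/

theorem exists_surjective_eqOn_of_finite {α : Type*} [Infinite α] {S : Set α} (hS : S.Finite)
    (f : α → α) : ∃ σ : α → α, Function.Surjective σ ∧ Set.EqOn σ f S := by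
  classical
  obtain ⟨e⟩ : Nonempty (α ≃ (Sᶜ : Set α)) := Cardinal.eq.1 <| .symm <|
    Cardinal.mk_compl_of_infinite S (hS.lt_aleph0.trans_le (Cardinal.aleph0_le_mk α))
  refine ⟨fun a => if ha : a ∈ S then f a else e.symm ⟨a, ha⟩, fun b => ⟨e b, ?_⟩, fun a ha => ?_⟩
  · simp only [dif_neg (e b).2, Subtype.coe_eta, e.symm_apply_apply]
  · exact dif_pos ha

section PositionalChoice

open OrdinalApprox

universe u v

variable {α : Type u} {C : α → Type v} (F : ∀ a, C a → Set α →o Prop)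

/-- One round of a reachability game in which option `c` at position `a` forces the play into `X`
iff `F a c X`: the positions with an option that forces the play into `X`. The least fixed point
consists of the positions that are won if the options may depend on the whole play. -/
def freeStep : Set α →o Set α where
  toFun X := {a | ∃ c, F a c X}
  monotone' _ _ hXY a := fun ⟨c, hc⟩ => ⟨c, (F a c).mono hXY hc⟩

/-- The round `freeStep F` with the option at every position `a` fixed to be `ρ a`. -/
def policyStep (ρ : ∀ a, C a) : Set α →o Set α where
  toFun X := {a | F a (ρ a) X}
  monotone' _ _ hXY a := (F a (ρ a)).mono hXY

theorem lfp_policyStep_le_lfp_freeStep (ρ : ∀ a, C a) :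
    (policyStep F ρ).lfp ≤ (freeStep F).lfp :=
  OrderHom.lfp.mono fun _ a h => ⟨ρ a, h⟩

theorem mem_lfpApprox_bot_iff (f : Set α →o Set α) (o : Ordinal.{u}) (a : α) :
    a ∈ lfpApprox f ⊥ o ↔ ∃ b < o, a ∈ f (lfpApprox f ⊥ b) := by
  rw [lfpApprox]
  simp

theorem exists_policy_lowering_rank [∀ a, Nonempty (C a)] :
    ∃ ρ : ∀ a, C a, ∀ a o, a ∈ lfpApprox (freeStep F) ⊥ o →
      ∃ b < o, a ∈ policyStep F ρ (lfpApprox (freeStep F) ⊥ b) := by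
  have exists_option (a : α) : ∃ c : C a, ∀ o, a ∈ lfpApprox (freeStep F) ⊥ o →
      ∃ b < o, F a c (lfpApprox (freeStep F) ⊥ b) := by
    let ranks := {o | a ∈ lfpApprox (freeStep F) ⊥ o}
    rcases ranks.eq_empty_or_nonempty with hempty | hne
    · exact ⟨Classical.arbitrary _, fun o ho => (hempty.subset ho).elim⟩
    · obtain ⟨b, hb, c, hc⟩ := (mem_lfpApprox_bot_iff _ _ a).1 (csInf_mem hne)
      exact ⟨c, fun o ho => ⟨b, hb.trans_le (csInf_le' ho), hc⟩⟩
  choose ρ hρ using exists_option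
  exact ⟨ρ, hρ⟩

theorem exists_lfp_policyStep_eq_lfp_freeStep [∀ a, Nonempty (C a)] :
    ∃ ρ : ∀ a, C a, (policyStep F ρ).lfp = (freeStep F).lfp := by
  obtain ⟨ρ, hρ⟩ := exists_policy_lowering_rank F
  have approx_le (o : Ordinal.{u}) : lfpApprox (freeStep F) ⊥ o ≤ (policyStep F ρ).lfp := by
    induction o using WellFoundedLT.induction with
    | ind o ih =>
      intro a ha
      obtain ⟨b, hb, hab⟩ := hρ a o ha
      exact OrderHom.map_lfp (policyStep F ρ) ▸ (policyStep F ρ).mono (ih b hb) hab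
  refine ⟨ρ, (lfp_policyStep_le_lfp_freeStep F ρ).antisymm ?_⟩
  obtain ⟨o, ho⟩ := lfp_mem_range_lfpApprox (freeStep F)
  exact ho ▸ approx_le o

end PositionalChoice

/-- The values that a regulation function may take at `D`; a regulation function is exactly a
function that takes such a value at every disjunctive state. -/
abbrev RegChoice (D : DState) : Type := {g : NState // ¬ DElem D → g ∈ D ∧ ¬ g.elem}

instance (D : DState) : Nonempty (RegChoice D) := by
  by_cases h : DElem D
  · exact ⟨.glob .pro (.prop 0), fun h' => absurd h h'⟩
  · obtain ⟨g, hg⟩ : ∃ g, g ∈ D ∧ ¬ g.elem := by simpa [DElem] using h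
    exact ⟨g, fun _ => hg⟩

/-- `ForcesInto X D g`: if the regulation picks `g` at `D`, then I win at once or can force the play
into `X` by the next move. This is a single round of `DWins`. -/
inductive ForcesInto (X : Set DState) : DState → NState → Prop where
  | leaf {D g} : DElem D → GameValid D → ForcesInto X D g
  | movI {D g g'} : g.myTurn → NChild g g' → g' ::ₘ D ∈ X → ForcesInto X (g ::ₘ D) g
  | dup {D g} : g.myTurn → g ::ₘ g ::ₘ D ∈ X → ForcesInto X (g ::ₘ D) g
  | movY {D g} : ¬ g.myTurn → ¬ g.elem → (∀ g', NChild g g' → g' ::ₘ D ∈ X) →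
      ForcesInto X (g ::ₘ D) g

theorem ForcesInto.mono {X Y : Set DState} (hXY : X ⊆ Y) {D : DState} {g : NState}
    (h : ForcesInto X D g) : ForcesInto Y D g := by
  cases h with
  | leaf hD hvalid => exact .leaf hD hvalid
  | movI hg hchild hX => exact .movI hg hchild (hXY hX)
  | dup hg hX => exact .dup hg (hXY hX)
  | movY hg helem hX => exact .movY hg helem fun g' hchild => hXY (hX g' hchild)

/-- `ForcesInto` as a family of rounds in the sense of `freeStep`, the options being the admissible
values of the regulation. -/
def regStep (D : DState) (g : RegChoice D) : Set DState →o Prop where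
  toFun X := ForcesInto X D g
  monotone' _ _ hXY := ForcesInto.mono hXY

theorem dWins_iff_mem_lfp (ρ : ∀ D, RegChoice D) (D : DState) :
    DWins (fun E => ρ E) D ↔ D ∈ (policyStep regStep ρ).lfp := by
  constructor
  · intro h
    have unfold_lfp {E : DState} {g : NState} (hg : ρ E = g)
        (hE : ForcesInto (policyStep regStep ρ).lfp E g) : E ∈ (policyStep regStep ρ).lfp :=
      (OrderHom.map_lfp (policyStep regStep ρ)).le (hg ▸ hE : ForcesInto _ E (ρ E))
    induction h with
    | leaf hD hvalid => exact unfold_lfp rfl (.leaf hD hvalid)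
    | movI hρ hg hchild _ ih => exact unfold_lfp hρ (.movI hg hchild ih)
    | dup hρ hg _ ih => exact unfold_lfp hρ (.dup hg ih)
    | movY hρ hg helem _ ih => exact unfold_lfp hρ (.movY hg helem ih)
  · suffices h : (policyStep regStep ρ).lfp ≤ {E | DWins (fun E => ρ E) E} from @h D
    refine OrderHom.lfp_le _ fun E (hE : ForcesInto _ E (ρ E)) => ?_
    generalize hρ : (ρ E : NState) = g at hE
    cases hE with
    | leaf hD hvalid => exact .leaf hD hvalid
    | movI hg hchild h => exact .movI hρ hg hchild h
    | dup hg h => exact .dup hρ hg h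
    | movY hg helem h => exact .movY hρ hg helem h

theorem setOf_winning_eq_lfp : {D | Winning D} = (freeStep regStep).lfp := by
  ext D
  constructor
  · rintro ⟨ρ, hρ, h⟩
    exact lfp_policyStep_le_lfp_freeStep regStep (fun E => ⟨ρ E, hρ E⟩)
      ((dWins_iff_mem_lfp _ D).1 h)
  · intro h
    obtain ⟨ρ, hρ⟩ := exists_lfp_policyStep_eq_lfp_freeStep regStep
    exact ⟨fun E => ρ E, fun E => (ρ E).2, (dWins_iff_mem_lfp ρ D).2 (hρ ▸ h)⟩

theorem NState.not_elem_of_myTurn {g : NState} (h : g.myTurn) : ¬ g.elem := by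
  rcases g with ⟨r, i, φ⟩ | ⟨r, φ⟩
  · cases r <;> cases φ <;> simp_all [NState.myTurn, NState.elem, Form.elem]
  · simp [NState.elem]

theorem NChild.not_elem {g g' : NState} (h : NChild g g') : ¬ g.elem := by
  cases h <;> exact id

namespace Winning

variable {D : DState} {g g' : NState}

theorem of_forcesInto (c : RegChoice D) (h : ForcesInto {E | Winning E} D c) : Winning D := by
  rw [setOf_winning_eq_lfp] at h
  exact setOf_winning_eq_lfp.ge ((OrderHom.map_lfp (freeStep regStep)).le ⟨c, h⟩)

theorem of_gameValid (hD : DElem D) (h : GameValid D) : Winning D :=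
  of_forcesInto (Classical.arbitrary _) (.leaf hD h)

theorem of_forcesInto_cons (hg : ¬ g.elem) (h : ForcesInto {E | Winning E} (g ::ₘ D) g) :
    Winning (g ::ₘ D) :=
  of_forcesInto ⟨g, fun _ => ⟨Multiset.mem_cons_self g D, hg⟩⟩ h

theorem of_child (hg : g.myTurn) (hchild : NChild g g') (h : Winning (g' ::ₘ D)) :
    Winning (g ::ₘ D) :=
  of_forcesInto_cons hchild.not_elem (.movI hg hchild h)

theorem of_duplicate (hg : g.myTurn) (h : Winning (g ::ₘ g ::ₘ D)) : Winning (g ::ₘ D) :=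
  of_forcesInto_cons (NState.not_elem_of_myTurn hg) (.dup hg h)

theorem of_forall_child (hg : ¬ g.myTurn) (helem : ¬ g.elem)
    (h : ∀ g', NChild g g' → Winning (g' ::ₘ D)) : Winning (g ::ₘ D) :=
  of_forcesInto_cons helem (.movY hg helem h)

theorem child (h : Winning (g ::ₘ D)) (hg : ¬ g.myTurn) (hchild : NChild g g') :
    Winning (g' ::ₘ D) := by
  obtain ⟨ρ, hρ, h⟩ := h
  generalize hE : g ::ₘ D = E at h
  induction h generalizing D with
  | leaf hD _ => exact absurd (hD g (hE ▸ Multiset.mem_cons_self g D)) hchild.not_elem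
  | @movI E s s' _ hs hs' _ ih =>
    rcases Multiset.cons_eq_cons.1 hE with ⟨rfl, _⟩ | ⟨_, F, rfl, rfl⟩
    · exact absurd hs hg
    · rw [Multiset.cons_swap]
      refine .of_child hs hs' ?_
      rw [Multiset.cons_swap]
      exact ih (Multiset.cons_swap g s' F)
  | @dup E s _ hs _ ih =>
    rcases Multiset.cons_eq_cons.1 hE with ⟨rfl, _⟩ | ⟨_, F, rfl, rfl⟩
    · exact absurd hs hg
    · rw [Multiset.cons_swap]
      refine .of_duplicate hs ?_
      rw [Multiset.cons_swap s g', Multiset.cons_swap s g']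
      exact ih (by rw [Multiset.cons_swap g s, Multiset.cons_swap g s])
  | @movY E s _ hs helem hwins ih =>
    rcases Multiset.cons_eq_cons.1 hE with ⟨rfl, rfl⟩ | ⟨_, F, rfl, rfl⟩
    · exact ⟨ρ, hρ, hwins g' hchild⟩
    · rw [Multiset.cons_swap]
      refine .of_forall_child hs helem fun s' hs' => ?_
      rw [Multiset.cons_swap]
      exact ih s' hs' (Multiset.cons_swap g s' F)

end Winning

theorem winning_cons_iff_forall_child {D : DState} {g : NState} (hg : ¬ g.myTurn)
    (helem : ¬ g.elem) : Winning (g ::ₘ D) ↔ ∀ g', NChild g g' → Winning (g' ::ₘ D) :=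
  ⟨fun h _ hchild => h.child hg hchild, .of_forall_child hg helem⟩

/-- Renaming of the nominals of a formula along `σ`. -/
def Form.rename (σ : ℕ → ℕ) : Form → Form
  | .prop p => .prop p
  | .nom i => .nom (σ i)
  | .rel i j => .rel (σ i) (σ j)
  | .and φ ψ => .and (φ.rename σ) (ψ.rename σ)
  | .or φ ψ => .or (φ.rename σ) (ψ.rename σ)
  | .imp φ ψ => .imp (φ.rename σ) (ψ.rename σ)
  | .neg φ => .neg (φ.rename σ)
  | .at_ i φ => .at_ (σ i) (φ.rename σ)
  | .box φ => .box (φ.rename σ)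
  | .dia φ => .dia (φ.rename σ)

/-- Renaming of the nominals of a game state, including its label, along `σ`. -/
def NState.rename (σ : ℕ → ℕ) : NState → NState
  | .loc r i φ => .loc r (σ i) (φ.rename σ)
  | .glob r φ => .glob r (φ.rename σ)

/-- The model in which the nominal `n` names the world named `σ n` in `M`, so that renaming a
formula amounts to evaluating it in this model. -/
def Model.rename (M : Model) (σ : ℕ → ℕ) : Model := { M with g := M.g ∘ σ }

theorem Form.rename_congr {σ τ : ℕ → ℕ} {φ : Form} (h : ∀ n, φ.occurs n → σ n = τ n) :
    φ.rename σ = φ.rename τ := by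
  induction φ <;> simp_all [Form.rename, Form.occurs]

theorem Form.rename_id (φ : Form) : φ.rename id = φ := by
  induction φ <;> simp_all [Form.rename]

theorem Form.rename_update_of_not_occurs {j : ℕ} {φ : Form} (hj : ¬ φ.occurs j) (k : ℕ) :
    φ.rename (Function.update id j k) = φ := by
  conv_rhs => rw [← φ.rename_id]
  refine Form.rename_congr fun n hn => Function.update_of_ne ?_ k id
  rintro rfl
  exact hj hn

theorem Form.finite_setOf_occurs (φ : Form) : {n | φ.occurs n}.Finite := by
  induction φ <;> simp_all [Form.occurs, Set.ofPred_or]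

namespace NState

variable {σ τ : ℕ → ℕ}

theorem rename_congr {s : NState} (h : ∀ n, s.occurs n → σ n = τ n) :
    s.rename σ = s.rename τ := by
  cases s with
  | loc r i φ =>
    simp only [NState.rename, h i (.inl rfl), Form.rename_congr fun n hn => h n (.inr hn)]
  | glob r φ => simp only [NState.rename, Form.rename_congr h]

theorem rename_update_of_not_occurs {j : ℕ} {s : NState} (hj : ¬ s.occurs j) (k : ℕ) :
    s.rename (Function.update id j k) = s := by
  cases s with
  | loc r i φ =>
    obtain ⟨hi, hφ⟩ := not_or.1 hj
    simp [NState.rename, Function.update_of_ne hi, Form.rename_update_of_not_occurs hφ]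
  | glob r φ => simp only [NState.rename, Form.rename_update_of_not_occurs hj]

theorem finite_setOf_occurs (s : NState) : {n | s.occurs n}.Finite := by
  cases s <;> simp [NState.occurs, Set.ofPred_or, Form.finite_setOf_occurs]

theorem elem_rename (σ : ℕ → ℕ) (s : NState) : (s.rename σ).elem ↔ s.elem := by
  rcases s with ⟨r, i, φ⟩ | ⟨r, φ⟩
  · cases φ <;> rfl
  · rfl

theorem myTurn_rename (σ : ℕ → ℕ) (s : NState) : (s.rename σ).myTurn ↔ s.myTurn := by
  rcases s with ⟨r, i, φ⟩ | ⟨r, φ⟩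
  · cases r <;> cases φ <;> rfl
  · cases r <;> rfl

end NState

theorem finite_setOf_dOccurs (D : DState) : {n | DOccurs n D}.Finite := by
  have : {n | DOccurs n D} = ⋃ s ∈ {s | s ∈ D}, {n | s.occurs n} := by
    ext; simp [DOccurs]
  exact this ▸ D.finite_toSet.biUnion fun s _ => s.finite_setOf_occurs

theorem NChild.rename (σ : ℕ → ℕ) {s t : NState} (h : NChild s t) :
    NChild (s.rename σ) (t.rename σ) := by
  cases h <;> constructor

theorem NChild.exists_of_rename {σ : ℕ → ℕ} (hσ : Function.Surjective σ) {s t : NState}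
    (h : NChild (s.rename σ) t) : ∃ t', NChild s t' ∧ t'.rename σ = t := by
  rcases s with ⟨r, i, φ⟩ | ⟨r, φ⟩
  · cases φ <;> simp only [NState.rename, Form.rename] at h
    case prop | nom | rel => cases h
    case and => cases h; exacts [⟨_, .andL .., rfl⟩, ⟨_, .andR .., rfl⟩]
    case or => cases h; exacts [⟨_, .orL .., rfl⟩, ⟨_, .orR .., rfl⟩]
    case imp => cases h; exacts [⟨_, .impL .., rfl⟩, ⟨_, .impR .., rfl⟩]
    case neg => cases h; exact ⟨_, .neg .., rfl⟩
    case at_ => cases h; exact ⟨_, .at_ .., rfl⟩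
    case box =>
      cases h with | box _ _ _ k =>
      obtain ⟨m, rfl⟩ := hσ k
      exact ⟨_, .box _ _ _ m, rfl⟩
    case dia =>
      cases h with | dia _ _ _ k =>
      obtain ⟨m, rfl⟩ := hσ k
      exact ⟨_, .dia _ _ _ m, rfl⟩
  · cases h with | glob _ _ k =>
    obtain ⟨m, rfl⟩ := hσ k
    exact ⟨_, .glob _ _ m, rfl⟩

theorem sat_rename (M : Model) (σ : ℕ → ℕ) (φ : Form) (w : M.W) :
    sat M w (φ.rename σ) ↔ sat (M.rename σ) w φ := by
  induction φ generalizing w <;> simp_all [sat, Form.rename, Model.rename]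

theorem elemIWin_rename (M : Model) (σ : ℕ → ℕ) (s : NState) :
    elemIWin M (s.rename σ) ↔ elemIWin (M.rename σ) s := by
  rcases s with ⟨_ | _, i, φ⟩ | ⟨r, φ⟩
  · exact sat_rename M σ φ _
  · exact not_congr (sat_rename M σ φ _)
  · rfl

theorem iWinsN_iff_elemIWin {M : Model} {s : NState} (hs : s.elem) :
    IWinsN M s ↔ elemIWin M s := by
  refine ⟨fun h => ?_, .leaf hs⟩
  cases h with
  | leaf _ h => exact h
  | move hturn => exact absurd hs (NState.not_elem_of_myTurn hturn)
  | resp _ hne => exact absurd hs hne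

theorem DElem.rename {D : DState} (hD : DElem D) (σ : ℕ → ℕ) : DElem (D.map (.rename σ)) := by
  intro s hs
  obtain ⟨t, ht, rfl⟩ := Multiset.mem_map.1 hs
  exact (t.elem_rename σ).2 (hD t ht)

theorem GameValid.rename_of_surjective {σ : ℕ → ℕ} (hσ : Function.Surjective σ) {D : DState}
    (hD : DElem D) (h : GameValid D) : GameValid (D.map (.rename σ)) := by
  intro M hM
  obtain ⟨s, hs, hwin⟩ := h (M.rename σ) (hM.comp hσ)
  refine ⟨s.rename σ, Multiset.mem_map_of_mem _ hs, ?_⟩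
  rw [iWinsN_iff_elemIWin ((s.elem_rename σ).2 (hD s hs)), elemIWin_rename]
  exact (iWinsN_iff_elemIWin (hD s hs)).1 hwin

theorem Winning.rename_of_surjective {σ : ℕ → ℕ} (hσ : Function.Surjective σ) {D : DState}
    (h : Winning D) : Winning (D.map (.rename σ)) := by
  obtain ⟨ρ, _, h⟩ := h
  induction h with
  | leaf hD hvalid => exact .of_gameValid (hD.rename σ) (.rename_of_surjective hσ hD hvalid)
  | movI _ hg hchild _ ih =>
    rw [Multiset.map_cons] at ih ⊢
    exact .of_child ((NState.myTurn_rename σ _).2 hg) (hchild.rename σ) ih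
  | dup _ hg _ ih =>
    simp only [Multiset.map_cons] at ih ⊢
    exact .of_duplicate ((NState.myTurn_rename σ _).2 hg) ih
  | movY _ hg helem _ ih =>
    rw [Multiset.map_cons]
    refine .of_forall_child (mt (NState.myTurn_rename σ _).1 hg)
      (mt (NState.elem_rename σ _).1 helem) fun t ht => ?_
    obtain ⟨t', ht', rfl⟩ := NChild.exists_of_rename hσ ht
    exact Multiset.map_cons (NState.rename σ) t' _ ▸ ih t' ht'

theorem Winning.rename {D : DState} (h : Winning D) (f : ℕ → ℕ) :
    Winning (D.map (.rename f)) := by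
  obtain ⟨σ, hσ, hσf⟩ := exists_surjective_eqOn_of_finite (finite_setOf_dOccurs D) f
  have : D.map (NState.rename σ) = D.map (NState.rename f) := Multiset.map_congr rfl fun s hs =>
    NState.rename_congr fun n hn => hσf ⟨s, hs, hn⟩
  exact this ▸ h.rename_of_surjective hσ

/-- (Proposition 2, part 3) For a nominal `j` not occurring in `D ⋁ (O, i : ◇φ)`:
`D ⋁ (O, i : ◇φ)` is winning iff `D ⋁ (O, j : R(i,j) ∧ φ)` is winning. -/
theorem winning_dia_iff_winning_fresh (D : DState) (i j : ℕ) (φ : Form)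
    (hj : ¬ DOccurs j (NState.loc .opp i (.dia φ) ::ₘ D)) :
    Winning (NState.loc .opp i (.dia φ) ::ₘ D) ↔
      Winning (NState.loc .opp j (.and (.rel i j) φ) ::ₘ D) := by
  have hjs : ∀ s ∈ NState.loc .opp i (.dia φ) ::ₘ D, ¬ s.occurs j := fun s hs h => hj ⟨s, hs, h⟩
  obtain ⟨hdia, hD⟩ := Multiset.forall_mem_cons.1 hjs
  obtain ⟨hi, hφ⟩ : i ≠ j ∧ ¬ φ.occurs j := not_or.1 hdia
  rw [winning_cons_iff_forall_child id id]
  refine ⟨fun h => h _ (.dia .opp i φ j), fun h g hg => ?_⟩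
  cases hg with | dia _ _ _ k =>
  have hstate : (NState.loc .opp j (.and (.rel i j) φ)).rename (Function.update id j k) =
      .loc .opp k (.and (.rel i k) φ) := by
    simp [NState.rename, Form.rename, Function.update_of_ne hi,
      Form.rename_update_of_not_occurs hφ]
  have hrest : D.map (.rename (Function.update id j k)) = D :=
    (Multiset.map_congr rfl fun s hs =>
      NState.rename_update_of_not_occurs (hD s hs) k).trans D.map_id
  simpa only [Multiset.map_cons, hstate, hrest] using h.rename (Function.update id j k)
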